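/- Let r ≥ 3 and k ≥ 3 be integers and set s = r·k/gcd(r,k). If m is a positive integer with m ∈ D_{r,k}, then s·m + 1 ∈ D_{r,k}. -/

import Mathlib

open SimpleGraph

/-- A `(v, b, r, k)`-combinatorial configuration: a bipartite simple graph on
`Fin v ⊕ Fin b` (left part `Fin v`, right part `Fin b`), connected (here:
preconnected, so that the empty graph counts as a configuration), where every
left vertex has degree `r`, every right vertex has degree `k`, and there is no
cycle of length `4`. -/
def IsConfiguration (v b r k : ℕ) (G : SimpleGraph (Fin v ⊕ Fin b)) : Prop :=
  (∀ i j : Fin v, ¬ G.Adj (Sum.inl i) (Sum.inl j)) ∧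
  (∀ i j : Fin b, ¬ G.Adj (Sum.inr i) (Sum.inr j)) ∧
  G.Preconnected ∧
  (∀ i : Fin v, (G.neighborSet (Sum.inl i)).ncard = r) ∧
  (∀ j : Fin b, (G.neighborSet (Sum.inr j)).ncard = k) ∧
  (∀ (x : Fin v ⊕ Fin b) (c : G.Walk x x), c.IsCycle → c.length ≠ 4)

/-- The tuple `(v, b, r, k)` is configurable if a `(v,b,r,k)`-combinatorial
configuration exists. -/
def Configurable (v b r k : ℕ) : Prop :=
  ∃ G : SimpleGraph (Fin v ⊕ Fin b), IsConfiguration v b r k G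

/-- `D r k` is the set of `d ∈ ℕ` such that
`(d·k/gcd(r,k), d·r/gcd(r,k), r, k)` is configurable. -/
def D (r k : ℕ) : Set ℕ :=
  {d | Configurable (d * k / Nat.gcd r k) (d * r / Nat.gcd r k) r k}

/-!
Since all degrees are at least two, a nonempty configuration has an edge `x — y` that is not a
bridge. Take copies of the configuration indexed by `P × Q × T` with `|P| = k / g`,
`|Q| = r / g` and `|T| = g`, where `g = gcd(r, k)`, and remove that edge from each copy. Every
copy `(p, q, t)` now lacks one incidence at its point `x` and one at its line `y`; join its `y`
to a new point `p` and its `x` to a new line `q`. Each new point is met by `|Q × T| = r` copies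
and each new line by `|P × T| = k` copies, so the degrees are restored. The copies are still
connected, and the new points and lines connect them with one another. No `4`-cycle passes
through a new vertex: its neighbours lie in distinct copies, so no two of them have a second
common neighbour.
-/

/-- A relation between points and lines is *partially linear* if two distinct points are never
both incident with two distinct lines. It is stated for an arbitrary relation so that it also
applies to the adjacency relation of a graph, where it excludes `4`-cycles. -/
def IsPartialLinear {A B : Type*} (I : A → B → Prop) : Prop :=
  ∀ ⦃a a' b b'⦄, I a b → I a b' → I a' b → I a' b' → a = a' ∨ b = b'

lemma isPartialLinear_adj_iff {V : Type*} {G : SimpleGraph V} :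
    IsPartialLinear G.Adj ↔ ∀ (x : V) (c : G.Walk x x), c.IsCycle → c.length ≠ 4 := by
  constructor
  · intro hG x c hc hlen
    match c, hc, hlen with
    | .cons h₁ (.cons h₂ (.cons h₃ (.cons h₄ .nil))), hc, _ =>
      have hnodup := hc.support_nodup
      rcases hG h₁ h₄.symm h₂.symm h₃ with rfl | rfl <;> simp at hnodup
  · intro hG a a' b b' hab hab' ha'b ha'b'
    by_contra! hne
    refine hG a (.cons hab (.cons ha'b.symm (.cons ha'b' (.cons hab'.symm .nil)))) ?_ rfl
    have := hab.ne
    have := hab'.ne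
    have := ha'b.ne
    have := ha'b'.ne
    rw [Walk.cons_isCycle_iff]
    constructor
    · simp only [Walk.cons_isPath_iff, Walk.IsPath.nil, Walk.support_cons, Walk.support_nil]
      grind
    · simp only [Walk.edges_cons, Walk.edges_nil]
      grind

lemma reachable_of_forall_adj_reachable {V W : Type*} {G : SimpleGraph V} {H : SimpleGraph W}
    {φ : V → W} (hφ : ∀ u w, G.Adj u w → H.Reachable (φ u) (φ w)) {u w : V}
    (huw : G.Reachable u w) : H.Reachable (φ u) (φ w) := by
  obtain ⟨walk⟩ := huw
  induction walk with
  | nil => exact .rfl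
  | cons huv _ ih => exact (hφ _ _ huv).trans ih

lemma exists_adj_not_isBridge {V : Type*} [Finite V] [Nontrivial V] {G : SimpleGraph V}
    (hG : G.Connected) (hdeg : ∀ v, (G.neighborSet v).ncard ≠ 1) :
    ∃ u w, G.Adj u w ∧ ¬ G.IsBridge s(u, w) := by
  classical
  have := Fintype.ofFinite V
  by_contra! hbridge
  have htree : G.IsTree := ⟨hG, isAcyclic_iff_forall_adj_isBridge.2 fun {u w} => hbridge u w⟩
  obtain ⟨v, hv⟩ := htree.exists_vert_degree_one_of_nontrivial
  exact hdeg v (by rw [← Nat.card_coe_set_eq, Nat.card_eq_fintype_card,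
    card_neighborSet_eq_degree, hv])

section LeviGraph

variable {A B A' B' : Type*} {I : A → B → Prop} {a a' : A} {b b' : B}

/-- The Levi graph (incidence graph) of an incidence relation between points and lines: the
bipartite graph on points and lines in which a point is adjacent to the lines through it. -/
def leviGraph (I : A → B → Prop) : SimpleGraph (A ⊕ B) where
  Adj
    | .inl a, .inr b => I a b
    | .inr b, .inl a => I a b
    | _, _ => False
  symm := ⟨by rintro (a | b) (a' | b') h <;> exact h⟩
  loopless := ⟨by rintro (a | b) h <;> exact h⟩

@[simp] lemma leviGraph_adj_inl_inr : (leviGraph I).Adj (.inl a) (.inr b) ↔ I a b := Iff.rfl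

@[simp] lemma leviGraph_adj_inr_inl : (leviGraph I).Adj (.inr b) (.inl a) ↔ I a b := Iff.rfl

@[simp] lemma not_leviGraph_adj_inl_inl : ¬ (leviGraph I).Adj (.inl a) (.inl a') := id

@[simp] lemma not_leviGraph_adj_inr_inr : ¬ (leviGraph I).Adj (.inr b) (.inr b') := id

lemma eq_leviGraph {G : SimpleGraph (A ⊕ B)} (hl : ∀ a a', ¬ G.Adj (.inl a) (.inl a'))
    (hr : ∀ b b', ¬ G.Adj (.inr b) (.inr b')) :
    G = leviGraph fun a b => G.Adj (.inl a) (.inr b) := by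
  ext (a | b) (a' | b') <;> simp [hl, hr, G.adj_comm]

lemma neighborSet_leviGraph_inl :
    (leviGraph I).neighborSet (.inl a) = Sum.inr '' {b | I a b} := by
  ext (a' | b) <;> simp

lemma neighborSet_leviGraph_inr :
    (leviGraph I).neighborSet (.inr b) = Sum.inl '' {a | I a b} := by
  ext (a | b') <;> simp

lemma ncard_neighborSet_leviGraph_inl :
    ((leviGraph I).neighborSet (.inl a)).ncard = {b | I a b}.ncard := by
  rw [neighborSet_leviGraph_inl, Set.ncard_image_of_injective _ Sum.inr_injective]

lemma ncard_neighborSet_leviGraph_inr :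
    ((leviGraph I).neighborSet (.inr b)).ncard = {a | I a b}.ncard := by
  rw [neighborSet_leviGraph_inr, Set.ncard_image_of_injective _ Sum.inl_injective]

lemma isPartialLinear_leviGraph_iff :
    IsPartialLinear (leviGraph I).Adj ↔ IsPartialLinear I := by
  constructor
  · intro h a a' b b' hab hab' ha'b ha'b'
    have := @h (.inl a) (.inl a') (.inr b) (.inr b') hab hab' ha'b ha'b'
    simpa using this
  · rintro h (a | b) (a' | b') (c | d) (c' | d') h₁ h₂ h₃ h₄ <;>
      simp only [leviGraph_adj_inl_inr, leviGraph_adj_inr_inl, not_leviGraph_adj_inl_inl,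
        not_leviGraph_adj_inr_inr] at h₁ h₂ h₃ h₄
    · simpa using h h₁ h₂ h₃ h₄
    · simpa [or_comm] using h h₁ h₃ h₂ h₄

/-- The homomorphism of Levi graphs induced by an incidence-preserving pair of maps on points
and lines. -/
def leviGraphMap {I' : A' → B' → Prop} (α : A → A') (β : B → B')
    (h : ∀ a b, I a b → I' (α a) (β b)) : leviGraph I →g leviGraph I' where
  toFun := Sum.map α β
  map_rel' {u w} := by
    rcases u with a | b <;> rcases w with a' | b'
    exacts [id, h a b', h a' b, id]

lemma leviGraph_top_preconnected [Nonempty A] [Nonempty B] :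
    (leviGraph fun (_ : A) (_ : B) => True).Preconnected := by
  have point_line (a : A) (b : B) :
      (leviGraph fun (_ : A) (_ : B) => True).Reachable (.inl a) (.inr b) :=
    Adj.reachable trivial
  obtain ⟨a₀⟩ := ‹Nonempty A›
  obtain ⟨b₀⟩ := ‹Nonempty B›
  rintro (a | b) (a' | b')
  · exact (point_line a b₀).trans (point_line a' b₀).symm
  · exact point_line a b'
  · exact (point_line a' b).symm
  · exact (point_line a₀ b).symm.trans (point_line a₀ b')

/-- The incidence relation obtained from `I` by removing the incidence of `x` with `y`. -/
def deleteFlag (I : A → B → Prop) (x : A) (y : B) (a : A) (b : B) : Prop :=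
  I a b ∧ ¬ (a = x ∧ b = y)

lemma leviGraph_deleteFlag (x : A) (y : B) :
    leviGraph (deleteFlag I x y) = (leviGraph I).deleteEdges {s(.inl x, .inr y)} := by
  ext (a | b) (a' | b') <;> simp [deleteFlag, and_comm]

end LeviGraph

section Incidence

variable {A B : Type*} {I : A → B → Prop} {r k : ℕ}

/-- `I` is the incidence relation of a configuration, on arbitrary types of points and lines:
its Levi graph is connected (or empty), every point is on `r` lines, every line contains `k`
points, and there are no `4`-cycles. -/
structure IsConfigIncidence (r k : ℕ) (I : A → B → Prop) : Prop where
  preconnected : (leviGraph I).Preconnected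
  ncard_lines : ∀ a, {b | I a b}.ncard = r
  ncard_points : ∀ b, {a | I a b}.ncard = k
  isPartialLinear : IsPartialLinear I

lemma isConfiguration_leviGraph_iff {v b : ℕ} {I : Fin v → Fin b → Prop} :
    IsConfiguration v b r k (leviGraph I) ↔ IsConfigIncidence r k I := by
  simp only [IsConfiguration, not_leviGraph_adj_inl_inl, not_leviGraph_adj_inr_inr,
    ncard_neighborSet_leviGraph_inl, ncard_neighborSet_leviGraph_inr, ← isPartialLinear_adj_iff,
    isPartialLinear_leviGraph_iff, not_false_eq_true, implies_true, true_and]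
  exact ⟨fun ⟨h₁, h₂, h₃, h₄⟩ => ⟨h₁, h₂, h₃, h₄⟩, fun ⟨h₁, h₂, h₃, h₄⟩ => ⟨h₁, h₂, h₃, h₄⟩⟩

lemma configurable_iff_exists_isConfigIncidence {v b : ℕ} :
    Configurable v b r k ↔ ∃ I : Fin v → Fin b → Prop, IsConfigIncidence r k I := by
  constructor
  · rintro ⟨G, hG⟩
    rw [eq_leviGraph hG.1 hG.2.1] at hG
    exact ⟨_, isConfiguration_leviGraph_iff.1 hG⟩
  · rintro ⟨I, hI⟩
    exact ⟨leviGraph I, isConfiguration_leviGraph_iff.2 hI⟩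

namespace IsConfigIncidence

lemma comap_equiv {A' B' : Type*} (h : IsConfigIncidence r k I) (eA : A' ≃ A) (eB : B' ≃ B) :
    IsConfigIncidence r k fun a b => I (eA a) (eB b) where
  preconnected := h.preconnected.map
    (leviGraphMap eA.symm eB.symm fun a b hab => by simpa using hab)
    (eA.symm.surjective.sumMap eB.symm.surjective)
  ncard_lines a := by
    rw [← h.ncard_lines (eA a)]
    exact Set.ncard_preimage_of_injective_subset_range (s := {b | I (eA a) b}) eB.injective
      (by simp)
  ncard_points b := by
    rw [← h.ncard_points (eB b)]
    exact Set.ncard_preimage_of_injective_subset_range (s := {a | I a (eB b)}) eA.injective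
      (by simp)
  isPartialLinear a a' b b' h₁ h₂ h₃ h₄ := by
    simpa using h.isPartialLinear h₁ h₂ h₃ h₄

lemma configurable [Finite A] [Finite B] (h : IsConfigIncidence r k I) :
    Configurable (Nat.card A) (Nat.card B) r k :=
  configurable_iff_exists_isConfigIncidence.2
    ⟨_, h.comap_equiv (Finite.equivFin A).symm (Finite.equivFin B).symm⟩

lemma exists_deleteFlag_preconnected [Finite A] [Finite B] [Nonempty A]
    (h : IsConfigIncidence r k I) (hr : 2 ≤ r) (hk : 2 ≤ k) :
    ∃ x y, I x y ∧ (leviGraph (deleteFlag I x y)).Preconnected := by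
  obtain ⟨a⟩ := ‹Nonempty A›
  obtain ⟨b, -⟩ : {b | I a b}.Nonempty :=
    Set.nonempty_of_ncard_ne_zero (by rw [h.ncard_lines]; lia)
  have : Nontrivial (A ⊕ B) := ⟨.inl a, .inr b, by simp⟩
  have hconn : (leviGraph I).Connected := ⟨h.preconnected⟩
  have hdeg : ∀ u, ((leviGraph I).neighborSet u).ncard ≠ 1 := by
    rintro (a | b)
    · rw [ncard_neighborSet_leviGraph_inl, h.ncard_lines]; lia
    · rw [ncard_neighborSet_leviGraph_inr, h.ncard_points]; lia
  obtain ⟨u, w, huw, hbridge⟩ := exists_adj_not_isBridge hconn hdeg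
  obtain ⟨x, y, hxy, hbridge⟩ : ∃ x y, I x y ∧ ¬ (leviGraph I).IsBridge s(.inl x, .inr y) := by
    rcases u with x | y <;> rcases w with x' | y'
    · exact (not_leviGraph_adj_inl_inl huw).elim
    · exact ⟨x, y', huw, hbridge⟩
    · exact ⟨x', y, huw, by rwa [Sym2.eq_swap]⟩
    · exact (not_leviGraph_adj_inr_inr huw).elim
  refine ⟨x, y, hxy, ?_⟩
  rw [leviGraph_deleteFlag]
  exact (hconn.connected_delete_edge_of_not_isBridge hbridge).preconnected

end IsConfigIncidence

end Incidence

section GlueCopies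

variable {A B P Q ι : Type*} {I : A → B → Prop} {x : A} {y : B} {f : ι → P} {g : ι → Q} {r : ℕ}

/-- The incidence relation on `ι` copies of `I`, new points `P` and new lines `Q` in which the
incidence of `x` with `y` is removed from each copy, and the line `y` and the point `x` of the
`i`-th copy are made incident with the new point `f i` and the new line `g i`. -/
def glueCopies (I : A → B → Prop) (x : A) (y : B) (f : ι → P) (g : ι → Q) :
    (ι × A) ⊕ P → (ι × B) ⊕ Q → Prop
  | .inl (i, a), .inl (j, b) => i = j ∧ deleteFlag I x y a b
  | .inl (i, a), .inr q => a = x ∧ g i = q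
  | .inr p, .inl (i, b) => b = y ∧ f i = p
  | .inr _, .inr _ => False

lemma glueCopies_swap (u : (ι × A) ⊕ P) (w : (ι × B) ⊕ Q) :
    glueCopies I x y f g u w ↔ glueCopies (Function.swap I) y x g f w u := by
  rcases u with ⟨i, a⟩ | p <;> rcases w with ⟨j, b⟩ | q <;>
    simp [glueCopies, deleteFlag, Function.swap, eq_comm, and_comm]

lemma isPartialLinear_glueCopies (hI : IsPartialLinear I) :
    IsPartialLinear (glueCopies I x y f g) := by
  rintro (⟨i, a⟩ | p) (⟨i', a'⟩ | p') (⟨j, b⟩ | q) (⟨j', b'⟩ | q') <;>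
    simp only [glueCopies, deleteFlag] <;> grind [IsPartialLinear]

open Classical in
lemma setOf_glueCopies_inl (hxy : I x y) (i : ι) (a : A) :
    {w | glueCopies I x y f g (.inl (i, a)) w} =
      (fun b => if a = x ∧ b = y then .inr (g i) else .inl (i, b)) '' {b | I a b} := by
  ext (⟨j, b⟩ | q) <;> simp only [glueCopies, deleteFlag, Set.mem_image, Set.mem_ofPred_eq] <;>
    grind

lemma setOf_glueCopies_inr (p : P) :
    {w | glueCopies I x y f g (.inr p) w} = (fun i => .inl (i, y)) '' (f ⁻¹' {p}) := by
  ext (⟨i, b⟩ | q) <;> simp [glueCopies, eq_comm, and_comm]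

lemma ncard_glueCopies_lines (hI : ∀ a, {b | I a b}.ncard = r) (hxy : I x y)
    (hf : ∀ p, (f ⁻¹' {p}).ncard = r) (u : (ι × A) ⊕ P) :
    {w | glueCopies I x y f g u w}.ncard = r := by
  classical
  rcases u with ⟨i, a⟩ | p
  · rw [setOf_glueCopies_inl hxy, Set.ncard_image_of_injective, hI]
    intro b b'
    grind
  · rw [setOf_glueCopies_inr, Set.ncard_image_of_injective, hf]
    intro i j
    simp

lemma ncard_glueCopies_points {k : ℕ} (hI : ∀ b, {a | I a b}.ncard = k) (hxy : I x y)
    (hg : ∀ q, (g ⁻¹' {q}).ncard = k) (w : (ι × B) ⊕ Q) :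
    {u | glueCopies I x y f g u w}.ncard = k := by
  simp only [glueCopies_swap (I := I)]
  exact ncard_glueCopies_lines (I := Function.swap I) hI hxy hg w

lemma glueCopies_preconnected (hI : (leviGraph (deleteFlag I x y)).Preconnected)
    (hfg : (leviGraph fun p q => ∃ i, f i = p ∧ g i = q).Preconnected) :
    (leviGraph (glueCopies I x y f g)).Preconnected := by
  set H := leviGraph (glueCopies I x y f g)
  let copy (i : ι) : leviGraph (deleteFlag I x y) →g H :=
    leviGraphMap (fun a => .inl (i, a)) (fun b => .inl (i, b)) fun _ _ hab => ⟨rfl, hab⟩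
  have new_point_line (i : ι) : H.Reachable (.inl (.inr (f i))) (.inr (.inr (g i))) := by
    have hy : H.Adj (.inl (.inr (f i))) (copy i (.inr y)) := ⟨rfl, rfl⟩
    have hx : H.Adj (copy i (.inl x)) (.inr (.inr (g i))) := ⟨rfl, rfl⟩
    exact hy.reachable.trans (((hI _ _).map (copy i)).trans hx.reachable)
  have new_new (u w : P ⊕ Q) : H.Reachable (Sum.map .inr .inr u) (Sum.map .inr .inr w) := by
    refine reachable_of_forall_adj_reachable ?_ (hfg u w)
    rintro (p | q) (p' | q') huw
    · exact (not_leviGraph_adj_inl_inl huw).elim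
    · obtain ⟨i, rfl, rfl⟩ := huw
      exact new_point_line i
    · obtain ⟨i, rfl, rfl⟩ := huw
      exact (new_point_line i).symm
    · exact (not_leviGraph_adj_inr_inr huw).elim
  have copy_new (i : ι) (u : A ⊕ B) : H.Reachable (copy i u) (.inl (.inr (f i))) :=
    have hy : H.Adj (copy i (.inr y)) (.inl (.inr (f i))) := ⟨rfl, rfl⟩
    ((hI _ _).map (copy i)).trans hy.reachable
  have exists_new (u) : ∃ n : P ⊕ Q, H.Reachable u (Sum.map .inr .inr n) := by
    rcases u with (⟨i, a⟩ | p) | (⟨i, b⟩ | q)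
    · exact ⟨.inl (f i), copy_new i (.inl a)⟩
    · exact ⟨.inl p, .rfl⟩
    · exact ⟨.inl (f i), copy_new i (.inr b)⟩
    · exact ⟨.inr q, .rfl⟩
  intro u w
  obtain ⟨n, hn⟩ := exists_new u
  obtain ⟨n', hn'⟩ := exists_new w
  exact hn.trans ((new_new n n').trans hn'.symm)

lemma IsConfigIncidence.glueCopies {k : ℕ} (h : IsConfigIncidence r k I) (hxy : I x y)
    (hI : (leviGraph (deleteFlag I x y)).Preconnected)
    (hfg : (leviGraph fun p q => ∃ i, f i = p ∧ g i = q).Preconnected)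
    (hf : ∀ p, (f ⁻¹' {p}).ncard = r) (hg : ∀ q, (g ⁻¹' {q}).ncard = k) :
    IsConfigIncidence r k (glueCopies I x y f g) where
  preconnected := glueCopies_preconnected hI hfg
  ncard_lines := ncard_glueCopies_lines h.ncard_lines hxy hf
  ncard_points := ncard_glueCopies_points h.ncard_points hxy hg
  isPartialLinear := isPartialLinear_glueCopies h.isPartialLinear

end GlueCopies

lemma Configurable.glueCopies {v b p q t : ℕ} (h : Configurable v b (q * t) (p * t))
    (hv : 0 < v) (hr : 2 ≤ q * t) (hk : 2 ≤ p * t) :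
    Configurable (p * q * t * v + p) (p * q * t * b + q) (q * t) (p * t) := by
  obtain ⟨I, hI⟩ := configurable_iff_exists_isConfigIncidence.1 h
  have : NeZero v := ⟨hv.ne'⟩
  have : NeZero p := ⟨by rintro rfl; lia⟩
  have : NeZero q := ⟨by rintro rfl; lia⟩
  have : NeZero t := ⟨by rintro rfl; lia⟩
  obtain ⟨x, y, hxy, hconn⟩ := hI.exists_deleteFlag_preconnected hr hk
  let f : Fin p × Fin q × Fin t → Fin p := fun c => c.1
  let g : Fin p × Fin q × Fin t → Fin q := fun c => c.2.1
  have hfg : (leviGraph fun a b => ∃ i, f i = a ∧ g i = b).Preconnected := by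
    convert leviGraph_top_preconnected (A := Fin p) (B := Fin q) with a b
    exact iff_true_intro ⟨(a, b, 0), rfl, rfl⟩
  have hf (a : Fin p) : (f ⁻¹' {a}).ncard = q * t := by
    have : f ⁻¹' {a} = {a} ×ˢ Set.univ := Set.prod_univ.symm
    simp [this, Set.ncard_prod]
  have hg (b : Fin q) : (g ⁻¹' {b}).ncard = p * t := by
    have : g ⁻¹' {b} = Set.univ ×ˢ {b} ×ˢ Set.univ := by rw [Set.prod_univ, Set.univ_prod]; rfl
    simp [this, Set.ncard_prod]
  convert (hI.glueCopies hxy hconn hfg hf hg).configurable using 1 <;> simp [mul_assoc]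

lemma mem_D_mul_iff {r k g d : ℕ} (hg : 0 < g) (hrk : r.Coprime k) :
    d ∈ D (r * g) (k * g) ↔ Configurable (d * k) (d * r) (r * g) (k * g) := by
  have hgcd : Nat.gcd (r * g) (k * g) = g := by rw [Nat.gcd_mul_right, hrk.gcd_eq_one, one_mul]
  simp only [D, Set.mem_ofPred_eq, hgcd, ← mul_assoc, Nat.mul_div_cancel _ hg]

theorem D_mem_smul_add_one_general (r k s m : ℕ) (hr : 2 ≤ r) (hk : 2 ≤ k)
    (hs : s = r * k / Nat.gcd r k) (hm : 0 < m) (h : m ∈ D r k) :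
    s * m + 1 ∈ D r k := by
  obtain ⟨g, r', k', hg, hcop, rfl, rfl⟩ :=
    Nat.exists_coprime' (Nat.gcd_pos_of_pos_left k (by lia : 0 < r))
  have hk' : 0 < k' := Nat.pos_of_mul_pos_right (by lia : 0 < k' * g)
  have hs' : s = k' * r' * g := by
    rw [hs, Nat.gcd_mul_right, hcop.gcd_eq_one, one_mul, ← mul_assoc, Nat.mul_div_cancel _ hg]
    ring
  rw [mem_D_mul_iff hg hcop] at h ⊢
  convert h.glueCopies (by positivity) hr hk using 1 <;> rw [hs'] <;> ring

/-- For `r ≥ 3`, `k ≥ 3` and `s = r·k / gcd(r,k)`: if `m` is a positive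
integer with `m ∈ D r k`, then `s·m + 1 ∈ D r k`. -/
theorem D_mem_smul_add_one (r k s m : ℕ) (hr : 3 ≤ r) (hk : 3 ≤ k)
    (hs : s = r * k / Nat.gcd r k) (hm : 0 < m) (h : m ∈ D r k) :
    s * m + 1 ∈ D r k :=
  D_mem_smul_add_one_general r k s m (by lia) (by lia) hs hm h
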